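/- In the linear regression model Y = Xβ + σξ with deterministic design X all of whose columns X_1,…,X_p are nonzero, for any a > 0, q ≥ 1 and integers 1 ≤ s < p: inf over measurable estimators β̂ : ℝ^n → ℝ^p of sup_{β ∈ Ω^p_{s,a}} E_β‖β̂(Y) − β‖_q^q ≥ σ_q^q · max over subsets S ⊆ {1,…,p} with |S| = s of Σ_{i∈S} ‖X_i‖_2^{−q}. -/

import Mathlib

/-! The minimax risk is bounded below by a Bayes risk. For `|S| = s`, give `β` independent
coordinates that are uniform on `[a, a + M]` inside `S` and zero outside; such `β` lie in
`sparseSet p s a`. The Bayes risk dominates the sum over `i ∈ S` of the coordinate risks, and in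
each of these the other coordinates of `β` may be frozen (`bayes_coord`). What remains is the
estimation of a scalar `t` from `y₀ + t X_i + σ ξ`, where the error of any estimator is compared
with the least squares error `ζ ~ N(0, σ² / ‖X_i‖²)` (`line_bound`).

The one-parameter bound comes from a symmetry. The map sending `t` to `t + 2ζ` and reflecting `ξ`
in the hyperplane orthogonal to `X_i` keeps the observation unchanged and preserves the product of
Lebesgue and Gaussian measure. Averaging the loss over this involution and using convexity of
`|·|^q` (here `q ≥ 1` enters) yields at least `|ζ|^q`, up to boundary effects controlled by
truncating to `|ζ| ≤ L`. Letting `M = (L + 1)²` with `L → ∞` makes the lost proportion `2L / M`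
vanish, and Fatou's lemma gives the sum of `E|ζ|^q = σ_q^q ‖X_i‖^{-q}` over `i ∈ S`.
-/

open MeasureTheory ProbabilityTheory Filter
open scoped ENNReal NNReal BigOperators Classical

noncomputable section

/-- The Gaussian distribution `N(m, σ²)` on `ℝ`. -/
def gauss (m σ : ℝ) : Measure ℝ := gaussianReal m ⟨σ ^ 2, sq_nonneg σ⟩

/-- The standard Gaussian distribution on `ℝ`. -/
def stdG : Measure ℝ := gaussianReal 0 1

/-- The law of a standard Gaussian vector `ξ ~ N(0, I_n)` on `ℝⁿ`. -/
def stdGV (n : ℕ) : Measure (Fin n → ℝ) := Measure.pi fun _ => gaussianReal 0 1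

/-- `Ω^p_{s,a}`: `s`-sparse vectors with nonzero coordinates at least `a` in absolute value. -/
def sparseSet (p s : ℕ) (a : ℝ) : Set (Fin p → ℝ) :=
  {β | (Finset.univ.filter fun i => β i ≠ 0).card ≤ s ∧ ∀ i, β i ≠ 0 → a ≤ |β i|}

/-- The risk `E_β ‖est(Y) − β‖_q^q` in the linear regression model `Y = Xβ + σξ`. -/
def linRisk (n p : ℕ) (X : Matrix (Fin n) (Fin p) ℝ) (σ q : ℝ)
    (est : (Fin n → ℝ) → Fin p → ℝ) (β : Fin p → ℝ) : ℝ≥0∞ :=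
  ∫⁻ ξ, ENNReal.ofReal (∑ j, |est (X.mulVec β + σ • ξ) j - β j| ^ q) ∂(stdGV n)

/-- The Euclidean norm `‖X_j‖₂` of the `j`-th column of `X`. -/
def colNorm (n p : ℕ) (X : Matrix (Fin n) (Fin p) ℝ) (j : Fin p) : ℝ :=
  Real.sqrt (∑ i, (X i j) ^ 2)

/-- `σ_q^q = E|η|^q` where `η ~ N(0, σ²)`. -/
def sigmaqq (σ q : ℝ) : ℝ := ∫ x, |x| ^ q ∂(gauss 0 σ)

/-- `P(σ ε ≥ t)` for a standard Gaussian `ε`. -/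
def PgeS (σ t : ℝ) : ℝ := (stdG {x | t ≤ σ * x}).toReal

/-! ### Convexity, and the least squares error along a direction -/

/-- Convexity of `|·|^q` at the midpoint of `u` and `2z - u`, which is `z`. -/
lemma two_mul_abs_rpow_le (q : ℝ) (hq : 1 ≤ q) (u z : ℝ) :
    2 * |z| ^ q ≤ |u| ^ q + |u - 2 * z| ^ q := by
  have hc := convexOn_rpow hq
  have h := hc.2 (Set.mem_Ici.2 (abs_nonneg u)) (Set.mem_Ici.2 (abs_nonneg (u - 2 * z)))
    (by norm_num : (0 : ℝ) ≤ 1 / 2) (by norm_num : (0 : ℝ) ≤ 1 / 2) (by norm_num)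
  simp only [smul_eq_mul] at h
  have h2 : |z| ≤ 1 / 2 * |u| + 1 / 2 * |u - 2 * z| := by
    have := abs_sub u (u - 2 * z)
    rw [show u - (u - 2 * z) = 2 * z by ring, abs_mul, abs_two] at this
    linarith
  have h3 := Real.rpow_le_rpow (abs_nonneg z) h2 (by linarith : (0 : ℝ) ≤ q)
  linarith

lemma two_mul_ofReal_rpow_le (q : ℝ) (hq : 1 ≤ q) (u z : ℝ) :
    2 * ENNReal.ofReal (|z| ^ q) ≤ ENNReal.ofReal (|u| ^ q) + ENNReal.ofReal (|u - 2 * z| ^ q) := by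
  rw [← ENNReal.ofReal_add (by positivity) (by positivity),
    show (2 : ℝ≥0∞) = ENNReal.ofReal 2 by simp, ← ENNReal.ofReal_mul (by norm_num)]
  exact ENNReal.ofReal_le_ofReal (two_mul_abs_rpow_le q hq u z)

/-- The linear functional `x ↦ σ⟪v, x⟫ / ‖v‖²`: the error of the least squares estimator of `t`
from `t • v + σ • x`. -/
def lsErr {n : ℕ} (σ : ℝ) (v x : EuclideanSpace ℝ (Fin n)) : ℝ :=
  σ * (inner ℝ v x / ‖v‖ ^ 2)

lemma measurable_lsErr {n : ℕ} (σ : ℝ) (v : EuclideanSpace ℝ (Fin n)) :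
    Measurable (lsErr σ v) := by
  unfold lsErr; fun_prop

/-- Rescaled by `‖v‖`, the least squares error has law `N(0, σ²)`. -/
lemma map_lsErr {n : ℕ} (σ : ℝ) (v : EuclideanSpace ℝ (Fin n)) (hv : v ≠ 0) :
    (stdGaussian (EuclideanSpace ℝ (Fin n))).map (fun x => lsErr σ v x * ‖v‖) = gauss 0 σ := by
  have hv' : ‖v‖ ≠ 0 := norm_ne_zero_iff.2 hv
  have h : (fun x => lsErr σ v x * ‖v‖) = innerSL ℝ ((σ / ‖v‖) • v) := by
    ext x
    simp only [lsErr, innerSL_apply_apply, inner_smul_left]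
    simp
    field_simp
  rw [h, IsGaussian.map_eq_gaussianReal, integral_strongDual_stdGaussian,
    variance_dual_stdGaussian, gauss]
  congr 1
  ext
  rw [Real.coe_toNNReal _ (sq_nonneg _), innerSL_apply_norm, norm_smul, Real.norm_eq_abs, abs_div,
    abs_norm, div_mul_cancel₀ _ hv', sq_abs]
  rfl

/-- The standard Gaussian is invariant under the reflection in the hyperplane orthogonal to `v`. -/
lemma lintegral_reflect {n : ℕ} (v : EuclideanSpace ℝ (Fin n))
    (F : EuclideanSpace ℝ (Fin n) → ℝ≥0∞) (hF : Measurable F) :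
    ∫⁻ x, F x ∂(stdGaussian _) =
      ∫⁻ x, F (x - (2 * (inner ℝ v x / ‖v‖ ^ 2)) • v) ∂(stdGaussian _) := by
  conv_lhs => rw [← stdGaussian_map (Submodule.reflection (ℝ ∙ v)ᗮ)]
  rw [lintegral_map hF (by fun_prop)]
  refine lintegral_congr fun x => congrArg F ?_
  rw [Submodule.reflection_orthogonal_apply, Submodule.reflection_singleton_apply]
  simp only [RCLike.ofReal_real_eq_id, id, neg_sub]
  module

/-! ### The one-parameter problem -/

/-- Lower bound for estimating a scalar `t`, spread uniformly over `[a, a + M]`, from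
`t • v + σ • x` with `x` standard Gaussian. Write `ζ = lsErr σ v x`. Reflecting `x` in the
hyperplane orthogonal to `v` while replacing `t` by `t + 2ζ` preserves the observation, the
reference measure and the event `A` below, and turns the error `g - t` into `g - t - 2ζ`; so on
`A` the two errors average to at least `|ζ|^q`. The event `A` requires `|ζ| ≤ L` and the least
squares estimate `t + ζ` to be at distance at least `L` from the endpoints of the interval, which
forces `t` into the interval. -/
lemma line_bound {n : ℕ} (σ q a L M : ℝ) (hq : 1 ≤ q)
    (v : EuclideanSpace ℝ (Fin n)) (hv : v ≠ 0)
    (g : EuclideanSpace ℝ (Fin n) → ℝ) (hg : Measurable g) :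
    ENNReal.ofReal (M - 2 * L) *
        ∫⁻ x, (if |lsErr σ v x| ≤ L then ENNReal.ofReal (|lsErr σ v x| ^ q) else 0)
          ∂(stdGaussian _) ≤
      ∫⁻ x, (∫⁻ t in Set.Icc a (a + M),
        ENNReal.ofReal (|g (t • v + σ • x) - t| ^ q)) ∂(stdGaussian _) := by
  have hv' : ‖v‖ ^ 2 ≠ 0 := pow_ne_zero 2 (norm_ne_zero_iff.2 hv)
  have hz := measurable_lsErr σ v
  obtain ⟨A, hA⟩ : ∃ A : ℝ → EuclideanSpace ℝ (Fin n) → Prop, ∀ t x, A t x ↔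
      |lsErr σ v x| ≤ L ∧ a + L ≤ t + lsErr σ v x ∧ t + lsErr σ v x ≤ a + M - L :=
    ⟨_, fun _ _ => Iff.rfl⟩
  let f : ℝ → EuclideanSpace ℝ (Fin n) → ℝ≥0∞ := fun t x =>
    ENNReal.ofReal (|g (t • v + σ • x) - t| ^ q)
  let H : EuclideanSpace ℝ (Fin n) → EuclideanSpace ℝ (Fin n) := fun x =>
    x - (2 * (inner ℝ v x / ‖v‖ ^ 2)) • v
  have hHz (x) : lsErr σ v (H x) = - lsErr σ v x := by
    simp only [lsErr, H, inner_sub_right, inner_smul_right, real_inner_self_eq_norm_sq]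
    field_simp
    ring
  have hHy (t x) : (t + 2 * lsErr σ v x) • v + σ • H x = t • v + σ • x := by
    simp only [lsErr, H]
    module
  have hAH (t x) : A (t + 2 * lsErr σ v x) (H x) ↔ A t x := by
    simp only [hA, hHz, abs_neg]
    rw [show t + 2 * lsErr σ v x + -lsErr σ v x = t + lsErr σ v x by ring]
  have hAm : MeasurableSet {p : EuclideanSpace ℝ (Fin n) × ℝ | A p.2 p.1} := by
    have hz1 : Measurable fun p : EuclideanSpace ℝ (Fin n) × ℝ => lsErr σ v p.1 := by fun_prop
    have hz2 : Measurable fun p : EuclideanSpace ℝ (Fin n) × ℝ => p.2 + lsErr σ v p.1 := by fun_prop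
    simp only [hA]
    exact (measurableSet_le hz1.abs measurable_const).inter
      ((measurableSet_le measurable_const hz2).inter (measurableSet_le hz2 measurable_const))
  have hfm : Measurable fun p : EuclideanSpace ℝ (Fin n) × ℝ => f p.2 p.1 := by
    simp only [f]
    fun_prop
  have hFm : Measurable fun p : EuclideanSpace ℝ (Fin n) × ℝ =>
      if A p.2 p.1 then f p.2 p.1 else 0 := hfm.ite hAm measurable_const
  -- `J`, the integral of the loss over `A`, is at most the right-hand side.
  have hJ1 : ∫⁻ x, (∫⁻ t, (if A t x then f t x else 0)) ∂(stdGaussian _) ≤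
      ∫⁻ x, (∫⁻ t in Set.Icc a (a + M), f t x) ∂(stdGaussian _) := by
    refine lintegral_mono fun x => ?_
    rw [← lintegral_indicator measurableSet_Icc]
    refine lintegral_mono fun t => ?_
    by_cases h : A t x
    · obtain ⟨h1, h2, h3⟩ := (hA t x).1 h
      rw [abs_le] at h1
      have : t ∈ Set.Icc a (a + M) := ⟨by linarith, by linarith⟩
      simp only [Set.indicator_of_mem this]
      split_ifs <;> simp
    · simp [h]
  -- `J` again, after the change of variables `(t, x) ↦ (t + 2ζ, H x)`.
  have hJ2 : ∫⁻ x, (∫⁻ t, (if A t x then f t x else 0)) ∂(stdGaussian _) =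
      ∫⁻ x, (∫⁻ t, (if A t x then ENNReal.ofReal (|g (t • v + σ • x) - t - 2 * lsErr σ v x| ^ q)
        else 0)) ∂(stdGaussian _) := by
    rw [lintegral_reflect v _ hFm.lintegral_prod_right']
    refine lintegral_congr fun x => ?_
    change ∫⁻ t, (if A t (H x) then f t (H x) else 0) = _
    rw [← lintegral_add_right_eq_self _ (2 * lsErr σ v x)]
    refine lintegral_congr fun t => ?_
    simp only [hAH, f, hHy]
    congr 4
    ring_nf
  -- For fixed `x` with `|ζ| ≤ L`, the section of `A` in `t` is an interval of length `M - 2L`.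
  have hB : 2 * (ENNReal.ofReal (M - 2 * L) *
        ∫⁻ x, (if |lsErr σ v x| ≤ L then ENNReal.ofReal (|lsErr σ v x| ^ q) else 0)
          ∂(stdGaussian _)) =
      ∫⁻ x, (∫⁻ t, (if A t x then 2 * ENNReal.ofReal (|lsErr σ v x| ^ q) else 0))
        ∂(stdGaussian _) := by
    rw [← lintegral_const_mul', ← lintegral_const_mul']
    rotate_left
    · simp
    · simp
    refine lintegral_congr fun x => ?_
    have : (fun t => if A t x then 2 * ENNReal.ofReal (|lsErr σ v x| ^ q) else 0) =
        (Set.Icc (a + L - lsErr σ v x) (a + M - L - lsErr σ v x)).indicator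
          (fun _ => if |lsErr σ v x| ≤ L then 2 * ENNReal.ofReal (|lsErr σ v x| ^ q) else 0) := by
      ext t
      have : t ∈ Set.Icc (a + L - lsErr σ v x) (a + M - L - lsErr σ v x) ↔
          a + L ≤ t + lsErr σ v x ∧ t + lsErr σ v x ≤ a + M - L := by
        rw [Set.mem_Icc, sub_le_iff_le_add, le_sub_iff_add_le]
      by_cases h1 : |lsErr σ v x| ≤ L
      · simp [hA, Set.indicator_apply, this, h1]
      · simp [hA, h1]
    rw [this, lintegral_indicator measurableSet_Icc, setLIntegral_const, Real.volume_Icc,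
      show a + M - L - lsErr σ v x - (a + L - lsErr σ v x) = M - 2 * L by ring]
    split_ifs
    · ring
    · simp
  refine le_trans ?_ hJ1
  rw [← ENNReal.mul_le_mul_iff_right two_ne_zero ENNReal.ofNat_ne_top, hB, two_mul]
  nth_rewrite 2 [hJ2]
  rw [← lintegral_add_left hFm.lintegral_prod_right']
  refine lintegral_mono fun x => ?_
  have hFx : Measurable fun t => if A t x then f t x else 0 := hFm.comp measurable_prodMk_left
  dsimp only
  rw [← lintegral_add_left hFx]
  refine lintegral_mono fun t => ?_
  by_cases h : A t x
  · simp only [h, if_true, f]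
    exact two_mul_ofReal_rpow_le q hq _ _
  · simp [h]

lemma lintegral_stdGV {n : ℕ} (F : (Fin n → ℝ) → ℝ≥0∞) (hF : Measurable F) :
    ∫⁻ ξ, F ξ ∂(stdGV n) =
      ∫⁻ x, F (WithLp.ofLp x) ∂(stdGaussian (EuclideanSpace ℝ (Fin n))) := by
  rw [← map_pi_eq_stdGaussian, lintegral_map (by fun_prop) (by fun_prop)]
  rfl

/-- `truncPow q w L x` is `|x / w|^q` truncated to zero when `|x / w| > L`. -/
def truncPow (q w L x : ℝ) : ℝ := if |x / w| ≤ L then |x / w| ^ q else 0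

lemma measurable_truncPow (q w L : ℝ) : Measurable (truncPow q w L) := by
  unfold truncPow
  refine Measurable.ite (measurableSet_le (by fun_prop) measurable_const) (by fun_prop)
    measurable_const

/-- `line_bound` in the coordinates of the model, with the law of the least squares error made
explicit. -/
lemma coord_bound {n : ℕ} (σ q a L M : ℝ) (hq : 1 ≤ q)
    (v : Fin n → ℝ) (hv : v ≠ 0) (g : (Fin n → ℝ) → ℝ) (hg : Measurable g) :
    ENNReal.ofReal (M - 2 * L) *
        ∫⁻ x, ENNReal.ofReal (truncPow q ‖WithLp.toLp 2 v‖ L x) ∂(gauss 0 σ) ≤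
      ∫⁻ t in Set.Icc a (a + M), ∫⁻ ξ,
        ENNReal.ofReal (|g (t • v + σ • ξ) - t| ^ q) ∂(stdGV n) := by
  have hv2 : WithLp.toLp 2 v ≠ 0 := by simpa using hv
  have hv3 : ‖WithLp.toLp 2 v‖ ≠ 0 := norm_ne_zero_iff.2 hv2
  have h := line_bound σ q a L M hq (WithLp.toLp 2 v) hv2 (fun x => g (WithLp.ofLp x))
    (by fun_prop)
  rw [lintegral_lintegral_swap] at h
  · convert h using 2
    · rw [← map_lsErr σ _ hv2, lintegral_map]
      · refine lintegral_congr fun x => ?_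
        simp only [truncPow, mul_div_cancel_right₀ _ hv3]
        split_ifs <;> simp
      · exact (measurable_truncPow _ _ _).ennreal_ofReal
      · exact (measurable_lsErr _ _).mul_const _
    · ext t
      rw [lintegral_stdGV _ (by fun_prop)]
      simp
  · refine Measurable.aemeasurable ?_
    simp only [Function.uncurry_def]
    fun_prop

/-! ### Bayes risk over the cube -/

/-- The prior on `β`: independent coordinates, uniform on `[a, a + M]` inside `S` and zero
outside `S`. -/
def prior {p : ℕ} (S : Finset (Fin p)) (a M : ℝ) (j : Fin p) : Measure ℝ :=
  if j ∈ S then (ENNReal.ofReal M)⁻¹ • volume.restrict (Set.Icc a (a + M)) else Measure.dirac 0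

lemma isProbabilityMeasure_prior {p : ℕ} (S : Finset (Fin p)) (a M : ℝ) (hM : 0 < M) (j : Fin p) :
    IsProbabilityMeasure (prior S a M j) := by
  unfold prior
  split_ifs
  · constructor
    have : ENNReal.ofReal M ≠ 0 := by simpa using hM
    simp [ENNReal.inv_mul_cancel this]
  · infer_instance

lemma ae_prior_mem_sparseSet {p : ℕ} (S : Finset (Fin p)) (a M : ℝ) (hM : 0 < M) :
    ∀ᵐ β ∂(Measure.pi (prior S a M)), β ∈ sparseSet p S.card a := by
  have := isProbabilityMeasure_prior S a M hM
  have h : ∀ j, ∀ᵐ β ∂(Measure.pi (prior S a M)), (β j = 0 ∨ a ≤ |β j|) ∧ (j ∉ S → β j = 0) := by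
    intro j
    have h1 : ∀ᵐ t ∂(prior S a M j), (t = 0 ∨ a ≤ |t|) ∧ (j ∉ S → t = 0) := by
      unfold prior
      split_ifs with hj
      · refine Measure.ae_smul_measure ?_ _
        filter_upwards [ae_restrict_mem measurableSet_Icc] with t ht
        exact ⟨Or.inr (ht.1.trans (le_abs_self t)), fun h => absurd hj h⟩
      · rw [ae_dirac_eq]
        simp
    exact (measurePreserving_eval (prior S a M) j).quasiMeasurePreserving.ae h1
  filter_upwards [ae_all_iff.2 h] with β hβ
  refine ⟨Finset.card_le_card fun i hi => ?_, fun i hi => (hβ i).1.resolve_left hi⟩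
  by_contra hiS
  exact (Finset.mem_filter.1 hi).2 ((hβ i).2 hiS)

/-- Bayes risk of the `i`-th coordinate under the prior, bounded below by freezing all other
coordinates of `β`. -/
lemma bayes_coord {n p : ℕ} (X : Matrix (Fin n) (Fin p) ℝ) (σ q a L M : ℝ) (hq : 1 ≤ q)
    (hM : 0 < M) (S : Finset (Fin p)) (i : Fin p) (hi : i ∈ S) (hX : (fun k => X k i) ≠ 0)
    (est : (Fin n → ℝ) → Fin p → ℝ) (hest : Measurable est) :
    ENNReal.ofReal ((M - 2 * L) / M) *
        ∫⁻ x, ENNReal.ofReal (truncPow q (colNorm n p X i) L x) ∂(gauss 0 σ) ≤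
      ∫⁻ β, (∫⁻ ξ, ENNReal.ofReal (|est (X.mulVec β + σ • ξ) i - β i| ^ q) ∂(stdGV n))
        ∂(Measure.pi (prior S a M)) := by
  have := isProbabilityMeasure_prior S a M hM
  have : SigmaFinite (stdGV n) := by unfold stdGV; infer_instance
  have hX' : Measurable fun β : Fin p → ℝ => X.mulVec β :=
    (Continuous.matrix_mulVec continuous_const continuous_id).measurable
  have hesti : Measurable fun y => est y i := (measurable_pi_apply i).comp hest
  set C := ENNReal.ofReal ((M - 2 * L) / M) *
        ∫⁻ x, ENNReal.ofReal (truncPow q (colNorm n p X i) L x) ∂(gauss 0 σ) with hC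
  have hm : Measurable fun β : Fin p → ℝ =>
      ∫⁻ ξ, ENNReal.ofReal (|est (X.mulVec β + σ • ξ) i - β i| ^ q) ∂(stdGV n) := by
    refine Measurable.lintegral_prod_right'
      (f := fun z : (Fin p → ℝ) × (Fin n → ℝ) =>
        ENNReal.ofReal (|est (X.mulVec z.1 + σ • z.2) i - z.1 i| ^ q)) ?_
    have : Measurable fun z : (Fin p → ℝ) × (Fin n → ℝ) => est (X.mulVec z.1 + σ • z.2) i :=
      hesti.comp (by fun_prop)
    fun_prop
  have h := lintegral_le_of_lmarginal_le (μ := prior S a M) {i}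
    (f := fun _ => C) measurable_const hm ?_
  · simpa using h
  rw [lmarginal_singleton, lmarginal_singleton]
  intro β
  simp only [lintegral_const, measure_univ, mul_one]
  simp only [prior, hi, if_true, lintegral_smul_measure, smul_eq_mul]
  -- Moving the `i`-th coordinate of `β` moves `X β` along the `i`-th column from `y₀`.
  let y₀ := X.mulVec (Function.update β i 0)
  have hy : ∀ t, X.mulVec (Function.update β i t) = y₀ + t • fun k => X k i := by
    intro t
    have : Function.update β i t = Function.update β i 0 + t • Pi.single i 1 := by
      ext j
      by_cases h : j = i
      · subst h; simp
      · simp [h]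
    rw [this, Matrix.mulVec_add, Matrix.mulVec_smul, Matrix.mulVec_single_one]
    rfl
  have hcb := coord_bound σ q a L M hq _ hX (fun y => est (y₀ + y) i)
    (hesti.comp (by fun_prop))
  have hnorm : ‖WithLp.toLp 2 (fun k => X k i)‖ = colNorm n p X i := by
    simp [EuclideanSpace.norm_eq, colNorm]
  rw [hnorm] at hcb
  simp only [← add_assoc] at hcb
  simp only [hy, Function.update_self]
  rw [hC, ENNReal.ofReal_div_of_pos hM, div_eq_mul_inv, mul_comm (ENNReal.ofReal _), mul_assoc]
  gcongr

/-- For each truncation level, the Bayes risk bounds the worst-case risk over `sparseSet`. -/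
lemma trunc_le_sup_risk {n p : ℕ} (X : Matrix (Fin n) (Fin p) ℝ) (hX : ∀ j, (fun i => X i j) ≠ 0)
    (σ q a L M : ℝ) (hq : 1 ≤ q) (hM : 0 < M) (S : Finset (Fin p))
    (est : (Fin n → ℝ) → Fin p → ℝ) (hest : Measurable est) :
    ∫⁻ x, ∑ i ∈ S, ENNReal.ofReal ((M - 2 * L) / M) *
        ENNReal.ofReal (truncPow q (colNorm n p X i) L x) ∂(gauss 0 σ) ≤
      ⨆ β ∈ sparseSet p S.card a, linRisk n p X σ q est β := by
  have := isProbabilityMeasure_prior S a M hM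
  have : SigmaFinite (stdGV n) := by unfold stdGV; infer_instance
  have hX' : Measurable fun β : Fin p → ℝ => X.mulVec β :=
    (Continuous.matrix_mulVec continuous_const continuous_id).measurable
  have hm : ∀ i, Measurable fun z : (Fin p → ℝ) × (Fin n → ℝ) =>
        ENNReal.ofReal (|est (X.mulVec z.1 + σ • z.2) i - z.1 i| ^ q) := by
    intro i
    have : Measurable fun z : (Fin p → ℝ) × (Fin n → ℝ) => est (X.mulVec z.1 + σ • z.2) i :=
      ((measurable_pi_apply i).comp hest).comp (by fun_prop)
    fun_prop
  calc _ = ∑ i ∈ S, ENNReal.ofReal ((M - 2 * L) / M) *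
        ∫⁻ x, ENNReal.ofReal (truncPow q (colNorm n p X i) L x) ∂(gauss 0 σ) := by
        have hT := fun i : Fin p => (measurable_truncPow q (colNorm n p X i) L).ennreal_ofReal
        rw [lintegral_finsetSum _ fun i _ => (hT i).const_mul _]
        exact Finset.sum_congr rfl fun i _ => lintegral_const_mul _ (hT i)
    _ ≤ ∑ i ∈ S, ∫⁻ β, (∫⁻ ξ, ENNReal.ofReal (|est (X.mulVec β + σ • ξ) i - β i| ^ q) ∂(stdGV n))
        ∂(Measure.pi (prior S a M)) :=
        Finset.sum_le_sum fun i hi => bayes_coord X σ q a L M hq hM S i hi (hX i) est hest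
    _ = ∫⁻ β, (∫⁻ ξ, ∑ i ∈ S, ENNReal.ofReal (|est (X.mulVec β + σ • ξ) i - β i| ^ q) ∂(stdGV n))
        ∂(Measure.pi (prior S a M)) := by
        rw [← lintegral_finsetSum _ fun i _ => (hm i).lintegral_prod_right']
        refine lintegral_congr fun β => ?_
        exact (lintegral_finsetSum _ fun i _ => (hm i).comp measurable_prodMk_left).symm
    _ ≤ ∫⁻ β, linRisk n p X σ q est β ∂(Measure.pi (prior S a M)) := by
        refine lintegral_mono fun β => lintegral_mono fun ξ => ?_
        dsimp only
        rw [← ENNReal.ofReal_sum_of_nonneg fun i _ => by positivity]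
        exact ENNReal.ofReal_le_ofReal (Finset.sum_le_univ_sum_of_nonneg fun i => by positivity)
    _ ≤ ∫⁻ _, (⨆ β ∈ sparseSet p S.card a, linRisk n p X σ q est β)
        ∂(Measure.pi (prior S a M)) := by
        refine lintegral_mono_ae ?_
        filter_upwards [ae_prior_mem_sparseSet S a M hM] with β hβ
        exact le_iSup₂_of_le β hβ le_rfl
    _ = _ := by simp

/-! ### Removing the truncation -/

/-- The truncation disappears in the limit: `L = k` and `M = (k + 1)²`. -/
lemma tendsto_truncPow (q w x : ℝ) :
    Tendsto (fun k : ℕ => ENNReal.ofReal ((((k : ℝ) + 1) ^ 2 - 2 * k) / ((k : ℝ) + 1) ^ 2) *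
      ENNReal.ofReal (truncPow q w k x)) atTop (nhds (ENNReal.ofReal (|x / w| ^ q))) := by
  have h1 : Tendsto (fun k : ℕ => (((k : ℝ) + 1) ^ 2 - 2 * k) / ((k : ℝ) + 1) ^ 2)
      atTop (nhds 1) := by
    have h0 := tendsto_one_div_add_atTop_nhds_zero_nat (𝕜 := ℝ)
    have : Tendsto (fun k : ℕ => 1 - 2 * (1 / ((k : ℝ) + 1)) + 2 * (1 / ((k : ℝ) + 1)) ^ 2)
        atTop (nhds (1 - 2 * 0 + 2 * 0 ^ 2)) :=
      ((h0.const_mul 2).const_sub 1).add ((h0.pow 2).const_mul 2)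
    norm_num at this
    refine this.congr fun k => ?_
    have : (k : ℝ) + 1 ≠ 0 := by positivity
    field_simp
    ring
  have h2 : Tendsto (fun k : ℕ => truncPow q w k x) atTop (nhds (|x / w| ^ q)) := by
    refine tendsto_const_nhds.congr' ?_
    filter_upwards [eventually_ge_atTop ⌈|x / w|⌉₊] with k hk
    rw [truncPow, if_pos ((Nat.le_ceil _).trans (by exact_mod_cast hk))]
  have := ENNReal.Tendsto.mul (ENNReal.tendsto_ofReal h1) (Or.inl (by simp))
    (ENNReal.tendsto_ofReal h2) (Or.inr (by simp))
  simpa using this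

/-- No integrability is needed: a non-integrable `|x|^q` would have Bochner integral `0`. -/
lemma ofReal_sigmaqq_mul_le (σ q : ℝ) {p : ℕ} (S : Finset (Fin p)) (w : Fin p → ℝ)
    (hw : ∀ i, 0 ≤ w i) :
    ENNReal.ofReal (sigmaqq σ q * ∑ i ∈ S, w i ^ (-q)) ≤
      ∫⁻ x, ∑ i ∈ S, ENNReal.ofReal (|x / w i| ^ q) ∂(gauss 0 σ) := by
  have hc : 0 ≤ ∑ i ∈ S, w i ^ (-q) := Finset.sum_nonneg fun i _ => Real.rpow_nonneg (hw i) _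
  have hs : ENNReal.ofReal (sigmaqq σ q) ≤ ∫⁻ x, ENNReal.ofReal (|x| ^ q) ∂(gauss 0 σ) := by
    unfold sigmaqq
    by_cases h : Integrable (fun x : ℝ => |x| ^ q) (gauss 0 σ)
    · rw [ofReal_integral_eq_lintegral_ofReal h (ae_of_all _ fun x => by positivity)]
    · simp [integral_undef h]
  rw [ENNReal.ofReal_mul' hc]
  refine (mul_le_mul_left hs _).trans ?_
  rw [← lintegral_mul_const' _ _ ENNReal.ofReal_ne_top]
  refine le_of_eq (lintegral_congr fun x => ?_)
  rw [← ENNReal.ofReal_mul' hc, Finset.mul_sum, ENNReal.ofReal_sum_of_nonneg]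
  · refine Finset.sum_congr rfl fun i _ => ?_
    rw [abs_div, abs_of_nonneg (hw i), Real.div_rpow (abs_nonneg x) (hw i), Real.rpow_neg (hw i),
      div_eq_mul_inv]
  · exact fun i _ => mul_nonneg (by positivity) (Real.rpow_nonneg (hw i) _)

/-- Theorem: lower bound `σ_q^q · max_{|S| = s} Σ_{i ∈ S} ‖X_i‖₂^{−q}`
for the scaled minimax risk in linear regression. -/
theorem stmt_2 (n p : ℕ) (X : Matrix (Fin n) (Fin p) ℝ)
    (hX : ∀ j, (fun i => X i j) ≠ 0)
    (σ q a : ℝ) (hσ : 0 < σ) (hq : 1 ≤ q) (ha : 0 < a)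
    (s : ℕ) (hs : 1 ≤ s) (hsp : s < p) :
    (⨅ (est : (Fin n → ℝ) → Fin p → ℝ) (_ : Measurable est),
        ⨆ β ∈ sparseSet p s a, linRisk n p X σ q est β) ≥
      ⨆ (S : Finset (Fin p)) (_ : S.card = s),
        ENNReal.ofReal (sigmaqq σ q * ∑ i ∈ S, colNorm n p X i ^ (-q)) := by
  refine iSup₂_le fun S hS => le_iInf₂ fun est hest => ?_
  subst hS
  refine (ofReal_sigmaqq_mul_le σ q S _ fun i => Real.sqrt_nonneg _).trans ?_
  -- Fatou's lemma along the truncation levels, each of which satisfies the bound.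
  let h : ℕ → ℝ → ℝ≥0∞ := fun k x => ∑ i ∈ S,
    ENNReal.ofReal ((((k : ℝ) + 1) ^ 2 - 2 * k) / ((k : ℝ) + 1) ^ 2) *
      ENNReal.ofReal (truncPow q (colNorm n p X i) k x)
  have hlim : ∀ x, Tendsto (fun k => h k x) atTop
      (nhds (∑ i ∈ S, ENNReal.ofReal (|x / colNorm n p X i| ^ q))) := fun x =>
    tendsto_finsetSum _ fun i _ => tendsto_truncPow q _ x
  have hmeas : ∀ k, Measurable (h k) := fun k =>
    Finset.measurable_sum _ fun i _ => (measurable_truncPow _ _ _).ennreal_ofReal.const_mul _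
  have hle : ∀ k, ∫⁻ x, h k x ∂(gauss 0 σ) ≤
      ⨆ β ∈ sparseSet p S.card a, linRisk n p X σ q est β := fun k =>
    trunc_le_sup_risk X hX σ q a k ((k + 1) ^ 2) hq (by positivity) S est hest
  calc _ = ∫⁻ x, liminf (fun k => h k x) atTop ∂(gauss 0 σ) :=
        lintegral_congr fun x => (hlim x).liminf_eq.symm
    _ ≤ liminf (fun k => ∫⁻ x, h k x ∂(gauss 0 σ)) atTop := lintegral_liminf_le hmeas
    _ ≤ _ := liminf_le_of_frequently_le' (Frequently.of_forall hle)

end
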